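/- Let α, β, δ, a₁, a₂, a₃ be real constants and A₁, A₂, A₃ smooth positive functions on an open interval I satisfying a_μ + (α t + β)·A_μ'(t)/A_μ(t) = δ for all t ∈ I and each μ = 1,2,3. Set u = (−1,0,0,0) (a constant covector field) and h(t,x,y,z) = diag(0, A₁(t)², A₂(t)², A₃(t)²). Then the vector field X with components (X⁰,X¹,X²,X³)(t,x,y,z) = (α t + β, a₁·x, a₂·y, a₃·z) satisfies L_X u = α u and L_X h = 2δ h on I × ℝ³; that is, X is a kinematic self-similar vector of the Bianchi I space-time with comoving fluid velocity. -/

import Mathlib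

/-- Partial derivative `∂_a f` on ℝ⁴ (coordinates indexed by `Fin 4`). -/
noncomputable def pderiv4 (a : Fin 4) (f : (Fin 4 → ℝ) → ℝ) (p : Fin 4 → ℝ) : ℝ :=
  fderiv ℝ f p (Pi.single a 1)

/-- Lie derivative of a covector field `u` along the vector field `X`:
`(L_X u)_a = Σ_c X^c ∂_c u_a + Σ_c u_c ∂_a X^c`. -/
noncomputable def lieDerivCov (X : (Fin 4 → ℝ) → Fin 4 → ℝ)
    (u : (Fin 4 → ℝ) → Fin 4 → ℝ) (p : Fin 4 → ℝ) : Fin 4 → ℝ :=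
  fun a =>
    (∑ c, X p c * pderiv4 c (fun q => u q a) p)
      + (∑ c, u p c * pderiv4 a (fun q => X q c) p)

/-- Lie derivative of a (0,2)-tensor field `T` along the vector field `X`:
`(L_X T)_{ab} = Σ_c X^c ∂_c T_{ab} + Σ_c T_{cb} ∂_a X^c + Σ_c T_{ac} ∂_b X^c`. -/
noncomputable def lieDerivT (X : (Fin 4 → ℝ) → Fin 4 → ℝ)
    (T : (Fin 4 → ℝ) → Matrix (Fin 4) (Fin 4) ℝ) (p : Fin 4 → ℝ) :
    Matrix (Fin 4) (Fin 4) ℝ :=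
  Matrix.of fun a b =>
    (∑ c, X p c * pderiv4 c (fun q => T q a b) p)
      + (∑ c, T p c b * pderiv4 a (fun q => X q c) p)
      + (∑ c, T p a c * pderiv4 b (fun q => X q c) p)

/-!
Each component `X^c` depends on `x^c` alone, so the matrix `∂_a X^c` is diagonal and the Lie
derivative acts on every component of a tensor separately. The equation `L_X h = 2δ h` thus
reduces to `2 X⁰ A_μ A_μ' + 2 a_μ A_μ² = 2δ A_μ²` for each `μ`, which is `2 A_μ²` times the
equation satisfied by `A_μ`.
-/

theorem pderiv4_const (b : Fin 4) (k : ℝ) (p : Fin 4 → ℝ) : pderiv4 b (fun _ => k) p = 0 := by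
  simp [pderiv4]

theorem pderiv4_comp_apply {f : ℝ → ℝ} {f' : ℝ} {p : Fin 4 → ℝ} {i : Fin 4}
    (hf : HasDerivAt f f' (p i)) (b : Fin 4) :
    pderiv4 b (fun q => f (q i)) p = if i = b then f' else 0 := by
  have hproj : HasFDerivAt (fun q : Fin 4 → ℝ => q i) (.proj (R := ℝ) i) p :=
    hasFDerivAt_apply i p
  have hcomp : HasFDerivAt (fun q : Fin 4 → ℝ => f (q i)) _ p := hf.comp_hasFDerivAt p hproj
  simp [pderiv4, hcomp.fderiv, Pi.single_apply]

theorem sum_mul_pderiv4_comp_apply {f : ℝ → ℝ} {f' : ℝ} {p : Fin 4 → ℝ} {i : Fin 4}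
    (hf : HasDerivAt f f' (p i)) (v : Fin 4 → ℝ) :
    ∑ c, v c * pderiv4 c (fun q => f (q i)) p = v i * f' := by
  simp [pderiv4_comp_apply hf]

theorem mul_add_mul_sq_eq_mul_sq_iff {r : ℝ} (hr : r ≠ 0) (v r' κ δ : ℝ) :
    v * (2 * r * r') + 2 * κ * r ^ 2 = 2 * δ * r ^ 2 ↔ κ + v * r' / r = δ := by
  have factor : v * (2 * r * r') + 2 * κ * r ^ 2 = 2 * (κ + v * r' / r) * r ^ 2 := by
    field_simp
    ring
  rw [factor, mul_left_inj' (pow_ne_zero 2 hr), mul_right_inj' two_ne_zero]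

section SeparableVectorField

variable {ξ : Fin 4 → ℝ → ℝ} {ξ' p : Fin 4 → ℝ}

theorem sum_mul_pderiv4_separable (hξ : ∀ c, HasDerivAt (ξ c) (ξ' c) (p c)) (w : Fin 4 → ℝ)
    (b : Fin 4) : ∑ c, w c * pderiv4 b (fun q => ξ c (q c)) p = w b * ξ' b := by
  simp [pderiv4_comp_apply (hξ _)]

theorem lieDerivCov_separable_apply (hξ : ∀ c, HasDerivAt (ξ c) (ξ' c) (p c))
    (u : (Fin 4 → ℝ) → Fin 4 → ℝ) (i : Fin 4) :
    lieDerivCov (fun q c => ξ c (q c)) u p i =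
      (∑ c, ξ c (p c) * pderiv4 c (fun q => u q i) p) + u p i * ξ' i := by
  rw [lieDerivCov, sum_mul_pderiv4_separable hξ]

theorem lieDerivT_separable_apply (hξ : ∀ c, HasDerivAt (ξ c) (ξ' c) (p c))
    (T : (Fin 4 → ℝ) → Matrix (Fin 4) (Fin 4) ℝ) (i j : Fin 4) :
    lieDerivT (fun q c => ξ c (q c)) T p i j =
      (∑ c, ξ c (p c) * pderiv4 c (fun q => T q i j) p) + T p i j * (ξ' i + ξ' j) := by
  rw [lieDerivT, Matrix.of_apply, sum_mul_pderiv4_separable hξ (fun c => T p c j),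
    sum_mul_pderiv4_separable hξ (T p i), mul_add, add_assoc]

theorem lieDerivCov_separable_const (hξ : ∀ c, HasDerivAt (ξ c) (ξ' c) (p c))
    (w : Fin 4 → ℝ) : lieDerivCov (fun q c => ξ c (q c)) (fun _ => w) p = w * ξ' := by
  ext i
  simp [lieDerivCov_separable_apply hξ, pderiv4_const]

theorem lieDerivT_separable_diagonal (hξ : ∀ c, HasDerivAt (ξ c) (ξ' c) (p c))
    {d : Fin 4 → ℝ → ℝ} {d' : Fin 4 → ℝ} {k : Fin 4} (hd : ∀ i, HasDerivAt (d i) (d' i) (p k)) :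
    lieDerivT (fun q c => ξ c (q c)) (fun q => Matrix.diagonal fun i => d i (q k)) p =
      Matrix.diagonal fun i => ξ k (p k) * d' i + 2 * ξ' i * d i (p k) := by
  ext i j
  rw [lieDerivT_separable_apply hξ]
  obtain rfl | hij := eq_or_ne i j
  · simp only [Matrix.diagonal_apply_eq]
    rw [sum_mul_pderiv4_comp_apply (hd i) fun c => ξ c (p c)]
    ring
  · simp [Matrix.diagonal_apply_ne _ hij, pderiv4_const]

theorem lieDerivT_separable_diagonal_sq_eq_smul_iff
    (hξ : ∀ c, HasDerivAt (ξ c) (ξ' c) (p c)) {s : Fin 4 → ℝ → ℝ} {s' : Fin 4 → ℝ} {k : Fin 4}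
    (hs : ∀ i, HasDerivAt (s i) (s' i) (p k)) (δ : ℝ) :
    lieDerivT (fun q c => ξ c (q c)) (fun q => Matrix.diagonal fun i => s i (q k) ^ 2) p =
        (2 * δ) • Matrix.diagonal (fun i => s i (p k) ^ 2) ↔
      ∀ i, s i (p k) ≠ 0 → ξ' i + ξ k (p k) * s' i / s i (p k) = δ := by
  have hsq : ∀ i, HasDerivAt (fun t => s i t ^ 2) (2 * s i (p k) * s' i) (p k) := fun i => by
    simpa using (hs i).fun_pow 2
  rw [lieDerivT_separable_diagonal hξ hsq, ← Matrix.diagonal_smul,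
    Matrix.diagonal_eq_diagonal_iff]
  refine forall_congr' fun i => ?_
  by_cases hi : s i (p k) = 0
  · simp [hi]
  · simpa [hi] using mul_add_mul_sq_eq_mul_sq_iff hi (ξ k (p k)) (s' i) (ξ' i) δ

end SeparableVectorField

theorem bianchiI_kinematic_self_similarity_general
    (α β δ : ℝ) (a : Fin 3 → ℝ) (A : Fin 3 → ℝ → ℝ)
    (u : (Fin 4 → ℝ) → Fin 4 → ℝ) (hu : ∀ p : Fin 4 → ℝ, u p = ![(-1 : ℝ), 0, 0, 0])
    (h : (Fin 4 → ℝ) → Matrix (Fin 4) (Fin 4) ℝ)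
    (hh : ∀ p : Fin 4 → ℝ,
      h p = Matrix.diagonal ![(0 : ℝ), (A 0 (p 0)) ^ 2, (A 1 (p 0)) ^ 2, (A 2 (p 0)) ^ 2])
    (X : (Fin 4 → ℝ) → Fin 4 → ℝ)
    (hX : ∀ p : Fin 4 → ℝ, X p = ![α * p 0 + β, a 0 * p 1, a 1 * p 2, a 2 * p 3])
    (p : Fin 4 → ℝ) (hA : ∀ μ, DifferentiableAt ℝ (A μ) (p 0)) (hA0 : ∀ μ, A μ (p 0) ≠ 0) :
    lieDerivCov X u p = α • u p ∧
      (lieDerivT X h p = (2 * δ) • h p ↔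
        ∀ μ, a μ + (α * p 0 + β) * deriv (A μ) (p 0) / A μ (p 0) = δ) := by
  let ξ : Fin 4 → ℝ → ℝ := Fin.cons (fun t => α * t + β) fun μ x => a μ * x
  let ξ' : Fin 4 → ℝ := Fin.cons α a
  let s : Fin 4 → ℝ → ℝ := Fin.cons 0 A
  let s' : Fin 4 → ℝ := Fin.cons 0 fun μ => deriv (A μ) (p 0)
  have hξ : ∀ c, HasDerivAt (ξ c) (ξ' c) (p c) :=
    Fin.cases ((hasDerivAt_const_mul α).add_const β) fun μ => hasDerivAt_const_mul (a μ)
  have hs : ∀ i, HasDerivAt (s i) (s' i) (p 0) :=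
    Fin.cases (hasDerivAt_const (p 0) 0) fun μ => (hA μ).hasDerivAt
  have X_eq : X = fun q c => ξ c (q c) := by
    ext q c
    rw [hX]
    fin_cases c <;> rfl
  have h_eq : h = fun q => Matrix.diagonal fun i => s i (q 0) ^ 2 := by
    ext1 q
    rw [hh]
    congr 1
    ext i
    fin_cases i
    exacts [(zero_pow two_ne_zero).symm, rfl, rfl, rfl]
  rw [X_eq, h_eq, funext hu]
  constructor
  · rw [lieDerivCov_separable_const hξ]
    ext i
    fin_cases i <;> simp [ξ']
  · rw [lieDerivT_separable_diagonal_sq_eq_smul_iff hξ hs]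
    simp [Fin.forall_fin_succ (n := 3), ξ, ξ', s, s', hA0]

/-- If the Bianchi I metric functions satisfy `a_μ + (αt + β) A_μ'/A_μ = δ`, then
`X = (αt + β)∂_t + a₁x∂_x + a₂y∂_y + a₃z∂_z` is a kinematic self-similar vector of the
comoving fluid: `L_X u = α u` and `L_X h = 2δ h`, where `u = (-1,0,0,0)` and
`h = diag(0, A₁², A₂², A₃²)`. -/
theorem bianchiI_kinematic_self_similarity
    (I : Set ℝ) (hIopen : IsOpen I) (hIconn : I.OrdConnected)
    (α β δ : ℝ) (a : Fin 3 → ℝ)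
    (A : Fin 3 → ℝ → ℝ) (hA : ∀ μ : Fin 3, ContDiff ℝ (⊤ : ℕ∞) (A μ))
    (hApos : ∀ (μ : Fin 3), ∀ t ∈ I, 0 < A μ t)
    (hKSS : ∀ (μ : Fin 3), ∀ t ∈ I,
      a μ + (α * t + β) * deriv (A μ) t / A μ t = δ)
    (u : (Fin 4 → ℝ) → Fin 4 → ℝ) (hu : ∀ p : Fin 4 → ℝ, u p = ![(-1 : ℝ), 0, 0, 0])
    (h : (Fin 4 → ℝ) → Matrix (Fin 4) (Fin 4) ℝ)
    (hh : ∀ p : Fin 4 → ℝ,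
      h p = Matrix.diagonal ![(0 : ℝ), (A 0 (p 0)) ^ 2, (A 1 (p 0)) ^ 2, (A 2 (p 0)) ^ 2])
    (X : (Fin 4 → ℝ) → Fin 4 → ℝ)
    (hX : ∀ p : Fin 4 → ℝ, X p = ![α * p 0 + β, a 0 * p 1, a 1 * p 2, a 2 * p 3]) :
    ∀ p : Fin 4 → ℝ, p 0 ∈ I →
      lieDerivCov X u p = α • u p ∧ lieDerivT X h p = (2 * δ) • h p := by
  intro p hp
  have ⟨covelocity, projection⟩ := bianchiI_kinematic_self_similarity_general α β δ a A u hu h hh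
    X hX p (fun μ => (hA μ).differentiable (by simp) (p 0)) (fun μ => (hApos μ _ hp).ne')
  exact ⟨covelocity, projection.2 fun μ => hKSS μ _ hp⟩
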